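/- Let α, β ≥ 0 with α ≠ β, and let F₁(x,y) = (y(1+βxy)/(1+αxy), x(1+αxy)/(1+βxy)) on (0,∞)². Let X and Y be (0,∞)-valued independent random variables with twice-differentiable densities that are strictly positive throughout (0,∞), set (U,V) := F₁(X,Y), and suppose U and V are independent and that (U,V) has the same distribution as (X,Y). Then there exist λ ∈ ℝ and c > 0 such that X ~ GIG(λ, cα, c) and Y ~ GIG(λ, cβ, c). -/

import Mathlib

open MeasureTheory ProbabilityTheory Set

/-- Density of the generalized inverse Gaussian distribution GIG(l, c1, c2):
proportional to `x^(l-1) * exp(-c1*x - c2/x)` on `(0,∞)`. -/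
noncomputable def gigPdf (l c1 c2 : ℝ) : ℝ → ℝ := fun x =>
  if 0 < x then
    x ^ (l - 1) * Real.exp (-(c1 * x) - c2 / x) /
      (∫ t in Set.Ioi (0 : ℝ), t ^ (l - 1) * Real.exp (-(c1 * t) - c2 / t))
  else 0

/-- The transformation F₁ with parameters α, β. -/
noncomputable def F1 (α β : ℝ) : ℝ × ℝ → ℝ × ℝ := fun p =>
  (p.2 * (1 + β * p.1 * p.2) / (1 + α * p.1 * p.2),
   p.1 * (1 + α * p.1 * p.2) / (1 + β * p.1 * p.2))

section
open Filter Topology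


/-- E1 from functional equation -/
theorem aux_E1 (α β : ℝ) (hα : 0 ≤ α) (hβ : 0 ≤ β)
    (φ ψ φ' ψ' : ℝ → ℝ) (hφ : ∀ x, 0 < x → HasDerivAt φ (φ' x) x)
    (hψ : ∀ x, 0 < x → HasDerivAt ψ (ψ' x) x)
    (hfe : ∀ x y, 0 < x → 0 < y → φ x + ψ y =
      φ (y * (1 + β * x * y) / (1 + α * x * y)) + ψ (x * (1 + α * x * y) / (1 + β * x * y)))
    (x y : ℝ) (hx : 0 < x) (hy : 0 < y) :
    x * φ' x = (x * (1 + α * x * y) / (1 + β * x * y)) * ψ' (x * (1 + α * x * y) / (1 + β * x * y))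
      - ((β - α) * (x * y) / ((1 + α * x * y) * (1 + β * x * y))) * (x * φ' x - y * ψ' y) := by
  have ha : 0 < 1 + α * x * y := by positivity
  have hb : 0 < 1 + β * x * y := by positivity
  set u := y * (1 + β * x * y) / (1 + α * x * y) with hu
  set v := x * (1 + α * x * y) / (1 + β * x * y) with hv
  have hup : 0 < u := by positivity
  have hvp : 0 < v := by positivity
  -- derivative in x
  have lin : ∀ k z y : ℝ, HasDerivAt (fun t => 1 + k * t * y) (k * y) z := by
    intro k z y
    simpa using (((hasDerivAt_id z).const_mul k).mul_const y).const_add 1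
  have lin2 : ∀ k z x : ℝ, HasDerivAt (fun t => 1 + k * x * t) (k * x) z := by
    intro k z x
    simpa using ((hasDerivAt_id z).const_mul (k * x)).const_add 1
  have d1 : φ' x = φ' u * ((y * (β * y) * (1 + α * x * y) - y * (1 + β * x * y) * (α * y)) / (1 + α * x * y)^2)
      + ψ' v * (((1 * (1 + α * x * y) + x * (α * y)) * (1 + β * x * y) - x * (1 + α * x * y) * (β * y)) / (1 + β * x * y)^2) := by
    have h1 : HasDerivAt (fun t => φ t + ψ y) (φ' x) x := (hφ x hx).add_const _
    have hU := ((lin β x y).const_mul y).div (lin α x y) ha.ne'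
    have hV := ((hasDerivAt_id x).mul (lin α x y)).div (lin β x y) hb.ne'
    have h2 := (HasDerivAt.comp x (hφ u hup) hU).add (HasDerivAt.comp x (hψ v hvp) hV)
    refine h1.unique (h2.congr_of_eventuallyEq ?_)
    filter_upwards [lt_mem_nhds hx] with t ht
    simpa using hfe t y ht hy
  have d2 : ψ' y = φ' u * (((1 * (1 + β * x * y) + y * (β * x)) * (1 + α * x * y) - y * (1 + β * x * y) * (α * x)) / (1 + α * x * y)^2)
      + ψ' v * ((x * (α * x) * (1 + β * x * y) - x * (1 + α * x * y) * (β * x)) / (1 + β * x * y)^2) := by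
    have h1 : HasDerivAt (fun t => φ x + ψ t) (ψ' y) y := (hψ y hy).const_add _
    have hV := ((lin2 α y x).const_mul x).div (lin2 β y x) hb.ne'
    have hU := ((hasDerivAt_id y).mul (lin2 β y x)).div (lin2 α y x) ha.ne'
    have h2 := (HasDerivAt.comp y (hφ u hup) hU).add (HasDerivAt.comp y (hψ v hvp) hV)
    refine h1.unique (h2.congr_of_eventuallyEq ?_)
    filter_upwards [lt_mem_nhds hy] with t ht
    simpa using hfe x t hx ht
  rw [d1, d2]
  generalize φ' u = P
  generalize ψ' v = Q
  rw [hv]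
  field_simp
  ring

theorem aux_limits (α β : ℝ) (hα : 0 ≤ α) (hβ : 0 ≤ β) (hαβ : α ≠ β)
    (A B : ℝ → ℝ) (hB : ∀ x, 0 < x → DifferentiableAt ℝ B x)
    (hE : ∀ x y, 0 < x → 0 < y → A x = B (x * (1 + α * x * y) / (1 + β * x * y))
      - ((β - α) * (x * y) / ((1 + α * x * y) * (1 + β * x * y))) * (A x - B y)) :
    ∃ L c, ∀ x, 0 < x → A x = L - c * α * x + c / x ∧ B x = L - c * β * x + c / x := by
  have hd : β - α ≠ 0 := sub_ne_zero.mpr hαβ.symm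
  have cl : ∀ k x : ℝ, Tendsto (fun y => 1 + k * x * y) (𝓝[>] 0) (𝓝 1) := by
    intro k x
    have : Continuous (fun y : ℝ => 1 + k * x * y) := by fun_prop
    simpa using (this.tendsto 0).mono_left nhdsWithin_le_nhds
  have lim1 : ∀ x, 0 < x → Tendsto (fun y => y * B y) (𝓝[>] 0) (𝓝 ((A x - B x) / ((β - α) * x))) := by
    intro x hx
    have hv : Tendsto (fun y => x * (1 + α * x * y) / (1 + β * x * y)) (𝓝[>] 0) (𝓝 x) := by
      have := ((cl α x).const_mul x).div (cl β x) one_ne_zero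
      rw [mul_one, div_one] at this
      exact this
    have hBv := (hB x hx).continuousAt.tendsto.comp hv
    have hy0 : Tendsto (fun y : ℝ => y) (𝓝[>] 0) (𝓝 0) := tendsto_id.mono_left nhdsWithin_le_nhds
    have key := ((((tendsto_const_nhds (x := A x)).sub hBv).mul ((cl α x).mul (cl β x))).div_const ((β - α) * x)).add (hy0.mul_const (A x))
    simp only [mul_one, zero_mul, add_zero] at key
    refine key.congr' ?_
    filter_upwards [self_mem_nhdsWithin] with y hy
    have hy : 0 < y := hy
    have e := hE x y hx hy
    have ha : 0 < 1 + α * x * y := by positivity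
    have hb : 0 < 1 + β * x * y := by positivity
    simp only [Function.comp]
    have e2 : A x - B (x * (1 + α * x * y) / (1 + β * x * y)) = - ((β - α) * (x * y) / ((1 + α * x * y) * (1 + β * x * y))) * (A x - B y) := by linarith
    rw [e2]
    field_simp
    ring
  obtain ⟨c, hc⟩ : ∃ c, c = (A 1 - B 1) / ((β - α) * 1) := ⟨_, rfl⟩
  have hAB : ∀ x, 0 < x → A x = B x + c * (β - α) * x := by
    intro x hx
    have := tendsto_nhds_unique (lim1 x hx) (lim1 1 one_pos)
    rw [← hc, div_eq_iff (by positivity)] at this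
    linarith
  obtain ⟨C, hC⟩ : ∃ C : ℝ → ℝ, C = fun x => B x + c * β * x - c / x := ⟨_, rfl⟩
  have hCd : ∀ x, 0 < x → DifferentiableAt ℝ C x := by
    intro x hx
    rw [hC]
    exact ((hB x hx).add (by fun_prop)).sub ((differentiableAt_const c).div differentiableAt_id hx.ne')
  have hCE : ∀ x y, 0 < x → 0 < y → C x - C (x * (1 + α * x * y) / (1 + β * x * y)) =
      ((β - α) * (x * y) / ((1 + α * x * y) * (1 + β * x * y))) * (C y - C x) := by
    intro x y hx hy
    have e := hE x y hx hy
    have ha : 0 < 1 + α * x * y := by positivity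
    have hb : 0 < 1 + β * x * y := by positivity
    rw [hAB x hx] at e
    have e2 : B (x * (1 + α * x * y) / (1 + β * x * y)) = B x + c * (β - α) * x + ((β - α) * (x * y) / ((1 + α * x * y) * (1 + β * x * y))) * (B x + c * (β - α) * x - B y) := by linarith
    simp only [hC]
    rw [e2]
    field_simp
    ring
  have lim2 : ∀ x, 0 < x → Tendsto C (𝓝[>] 0) (𝓝 (C x + x * deriv C x)) := by
    intro x hx
    have hv : HasDerivAt (fun y : ℝ => x * (1 + α * x * y) / (1 + β * x * y)) (x * x * (α - β)) 0 := by
      have l : ∀ k : ℝ, HasDerivAt (fun t => 1 + k * x * t) (k * x) 0 := by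
        intro k
        simpa using ((hasDerivAt_id (0:ℝ)).const_mul (k * x)).const_add 1
      have := ((l α).const_mul x).div (l β) (by simp)
      convert! this using 1
      simp; ring
    have hcomp : HasDerivAt (fun y : ℝ => C (x * (1 + α * x * y) / (1 + β * x * y))) (deriv C x * (x * x * (α - β))) 0 := by
      refine HasDerivAt.comp (h₂ := C) (0:ℝ) ?_ hv
      simpa using (hCd x hx).hasDerivAt
    have hs := hcomp.tendsto_slope_zero_right
    simp only [zero_add, mul_zero, add_zero, mul_one, div_one, smul_eq_mul] at hs
    have key := ((hs.mul ((cl α x).mul (cl β x))).div_const (-(β - α) * x)).const_add (C x)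
    have e0 : C x + deriv C x * (x * x * (α - β)) * (1 * 1) / (-(β - α) * x) = C x + x * deriv C x := by
      field_simp
      ring
    rw [e0] at key
    refine key.congr' ?_
    filter_upwards [self_mem_nhdsWithin] with y hy
    have hy : 0 < y := hy
    have e := hCE x y hx hy
    have ha : 0 < 1 + α * x * y := by positivity
    have hb : 0 < 1 + β * x * y := by positivity
    have e2 : C (x * (1 + α * x * y) / (1 + β * x * y)) - C x = - (((β - α) * (x * y) / ((1 + α * x * y) * (1 + β * x * y))) * (C y - C x)) := by linarith
    rw [e2]
    field_simp
    ring
  obtain ⟨L, hL⟩ : ∃ L, L = C 1 + 1 * deriv C 1 := ⟨_, rfl⟩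
  have hlimC : Tendsto C (𝓝[>] 0) (𝓝 L) := hL ▸ lim2 1 one_pos
  have hode : ∀ x, 0 < x → C x + x * deriv C x = L := fun x hx =>
    tendsto_nhds_unique (lim2 x hx) hlimC
  have hW : ∀ x, 0 < x → HasDerivAt (fun x => x * C x - L * x) 0 x := by
    intro x hx
    have := ((hasDerivAt_id x).mul (hCd x hx).hasDerivAt).sub ((hasDerivAt_id x).const_mul L)
    convert! this using 1
    have := hode x hx
    simp; linarith
  have hconst : ∀ x, 0 < x → ∀ y, 0 < y → x * C x - L * x = y * C y - L * y := by
    intro x hx y hy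
    exact (isOpen_Ioi (a := (0:ℝ))).is_const_of_deriv_eq_zero isPreconnected_Ioi (f := fun x => x * C x - L * x)
      (fun z hz => (hW z hz).differentiableAt.differentiableWithinAt) (fun z hz => (hW z hz).deriv) hx hy
  have hy0 : Tendsto (fun y : ℝ => y) (𝓝[>] 0) (𝓝 0) := tendsto_id.mono_left nhdsWithin_le_nhds
  have hCL : ∀ x, 0 < x → C x = L := by
    intro x hx
    have t1 := (hy0.mul hlimC).sub (hy0.const_mul L)
    have t2 : Tendsto (fun y : ℝ => y * C y - L * y) (𝓝[>] 0) (𝓝 (x * C x - L * x)) := by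
      refine tendsto_const_nhds.congr' ?_
      filter_upwards [self_mem_nhdsWithin] with y hy
      exact hconst x hx y hy
    have := tendsto_nhds_unique t2 t1
    simp only [zero_mul, mul_zero, sub_zero] at this
    have h3 : x * (C x - L) = 0 := by linarith
    rcases mul_eq_zero.mp h3 with h | h
    · exact absurd h hx.ne'
    · linarith
  refine ⟨L, c, fun x hx => ?_⟩
  have h1 := hCL x hx
  simp only [hC] at h1
  have h2 := hAB x hx
  constructor <;> linarith

theorem aux_integrate (L c a : ℝ) (φ φ' : ℝ → ℝ) (hφ : ∀ x, 0 < x → HasDerivAt φ (φ' x) x)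
    (h : ∀ x, 0 < x → x * φ' x = L - c * a * x + c / x) :
    ∃ k, ∀ x, 0 < x → φ x = k + (L * Real.log x - c * a * x - c / x) := by
  have hW : ∀ x, 0 < x → HasDerivAt (fun x => φ x - (L * Real.log x - c * a * x - c / x)) 0 x := by
    intro x hx
    have := (hφ x hx).sub ((((Real.hasDerivAt_log hx.ne').const_mul L).sub ((hasDerivAt_id x).const_mul (c * a))).sub
      ((hasDerivAt_inv hx.ne').const_mul c))
    convert! this using 1
    have := h x hx
    field_simp
    field_simp at this
    linear_combination -this
  refine ⟨φ 1 - (L * Real.log 1 - c * a * 1 - c / 1), fun x hx => ?_⟩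
  have := (isOpen_Ioi (a := (0:ℝ))).is_const_of_deriv_eq_zero isPreconnected_Ioi (f := fun x => φ x - (L * Real.log x - c * a * x - c / x))
      (fun z hz => (hW z hz).differentiableAt.differentiableWithinAt) (fun z hz => (hW z hz).deriv) hx (show (1:ℝ) ∈ Ioi 0 from mem_Ioi.mpr one_pos)
  linarith

theorem F1_invol (α β : ℝ) (hα : 0 ≤ α) (hβ : 0 ≤ β) (p : ℝ × ℝ) (h1 : 0 < p.1) (h2 : 0 < p.2) :
    F1 α β (F1 α β p) = p := by
  obtain ⟨x, y⟩ := p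
  simp only at h1 h2
  have ha : 0 < 1 + α * x * y := by positivity
  have hb : 0 < 1 + β * x * y := by positivity
  have e : ∀ k : ℝ, 1 + k * (y * (1 + β * x * y) / (1 + α * x * y)) * (x * (1 + α * x * y) / (1 + β * x * y)) = 1 + k * x * y := by
    intro k
    field_simp
  ext
  · simp only [F1]
    rw [e, e]
    field_simp
  · simp only [F1]
    rw [e, e]
    field_simp

theorem F1_pos (α β : ℝ) (hα : 0 ≤ α) (hβ : 0 ≤ β) (p : ℝ × ℝ) (h : p ∈ Ioi (0:ℝ) ×ˢ Ioi (0:ℝ)) :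
    F1 α β p ∈ Ioi (0:ℝ) ×ˢ Ioi (0:ℝ) := by
  obtain ⟨x, y⟩ := p
  obtain ⟨h1, h2⟩ := h
  simp only [mem_Ioi] at h1 h2
  have ha : 0 < 1 + α * x * y := by positivity
  have hb : 0 < 1 + β * x * y := by positivity
  constructor <;> simp only [F1, mem_Ioi] <;> positivity

theorem F1_meas (α β : ℝ) : Measurable (F1 α β) := by
  unfold F1
  fun_prop

theorem F1_fderiv (α β : ℝ) (hα : 0 ≤ α) (hβ : 0 ≤ β) (p : ℝ × ℝ) (h : p ∈ Ioi (0:ℝ) ×ˢ Ioi (0:ℝ)) :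
    ∃ D : ℝ × ℝ →L[ℝ] ℝ × ℝ, HasFDerivAt (F1 α β) D p ∧ |D.det| = 1 := by
  obtain ⟨x, y⟩ := p
  obtain ⟨h1, h2⟩ := h
  simp only [mem_Ioi] at h1 h2
  have ha : 0 < 1 + α * x * y := by positivity
  have hb : 0 < 1 + β * x * y := by positivity
  have hfst : HasFDerivAt (fun p : ℝ × ℝ => p.1) (ContinuousLinearMap.fst ℝ ℝ ℝ) (x, y) := hasFDerivAt_fst
  have hsnd : HasFDerivAt (fun p : ℝ × ℝ => p.2) (ContinuousLinearMap.snd ℝ ℝ ℝ) (x, y) := hasFDerivAt_snd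
  have lin : ∀ k : ℝ, HasFDerivAt (fun p : ℝ × ℝ => 1 + k * p.1 * p.2) _ (x, y) := fun k =>
    ((hfst.const_mul k).mul hsnd).const_add 1
  have hinv : ∀ k : ℝ, 0 < 1 + k * x * y → HasFDerivAt (fun p : ℝ × ℝ => (1 + k * p.1 * p.2)⁻¹) _ (x, y) := fun k hk =>
    (hasDerivAt_inv hk.ne').comp_hasFDerivAt (x, y) (lin k)
  have hU := (hsnd.mul (lin β)).mul (hinv α ha)
  have hV := (hfst.mul (lin α)).mul (hinv β hb)
  have hD := hU.prodMk hV
  refine ⟨(Matrix.toLin (.finTwoProd ℝ) (.finTwoProd ℝ)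
    !![y^2 * (β - α) / (1 + α * x * y)^2, (1 + 2 * β * x * y + α * β * (x * y)^2) / (1 + α * x * y)^2;
       (1 + 2 * α * x * y + α * β * (x * y)^2) / (1 + β * x * y)^2, x^2 * (α - β) / (1 + β * x * y)^2]).toContinuousLinearMap, ?_, ?_⟩
  · refine HasFDerivAt.congr_fderiv (f' := _) (hD.congr_of_eventuallyEq ?_) ?_
    · refine Eventually.of_forall fun p => ?_
      simp [F1, div_eq_mul_inv]
    · rw [Matrix.toLin_finTwoProd_toContinuousLinearMap]
      ext <;> simp <;> field_simp <;> ring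
  · simp only [LinearMap.det_toContinuousLinearMap, LinearMap.det_toLin, Matrix.det_fin_two_of]
    rw [abs_eq zero_le_one]
    right
    field_simp
    ring

theorem dens_restrict {Ω : Type*} [MeasureSpace Ω] (X : Ω → ℝ) (hXm : Measurable X)
    (hXpos : ∀ ω, 0 < X ω) (f : ℝ → ℝ)
    (hf : Measure.map X ℙ = volume.withDensity (fun x => ENNReal.ofReal (f x))) :
    Measure.map X ℙ = (volume.restrict (Ioi 0)).withDensity (fun x => ENNReal.ofReal (f x)) := by
  rw [← restrict_withDensity measurableSet_Ioi, ← hf, eq_comm]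
  refine Measure.restrict_eq_self_of_ae_mem ?_
  exact (ae_map_iff (p := fun x => x ∈ Ioi (0:ℝ)) hXm.aemeasurable measurableSet_Ioi).mpr
    (Filter.Eventually.of_forall hXpos)

theorem func_eq {Ω : Type*} [MeasureSpace Ω] [IsProbabilityMeasure (ℙ : Measure Ω)]
    (α β : ℝ) (hα : 0 ≤ α) (hβ : 0 ≤ β)
    (X Y : Ω → ℝ) (hXm : Measurable X) (hYm : Measurable Y)
    (hIndep : IndepFun X Y ℙ)
    (f g : ℝ → ℝ)
    (hf : Measure.map X ℙ = (volume.restrict (Ioi 0)).withDensity (fun x => ENNReal.ofReal (f x)))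
    (hg : Measure.map Y ℙ = (volume.restrict (Ioi 0)).withDensity (fun x => ENNReal.ofReal (g x)))
    (hfpos : ∀ x ∈ Ioi (0 : ℝ), 0 < f x)
    (hgpos : ∀ x ∈ Ioi (0 : ℝ), 0 < g x)
    (hfc : ContinuousOn f (Ioi 0)) (hgc : ContinuousOn g (Ioi 0))
    (hSameDist :
      Measure.map (fun ω => F1 α β (X ω, Y ω)) ℙ = Measure.map (fun ω => (X ω, Y ω)) ℙ) :
    ∀ x y, 0 < x → 0 < y → f x * g y = f (F1 α β (x, y)).1 * g (F1 α β (x, y)).2 := by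
  set Q : Set (ℝ × ℝ) := Ioi (0:ℝ) ×ˢ Ioi (0:ℝ) with hQ
  have hQo : IsOpen Q := isOpen_Ioi.prod isOpen_Ioi
  have hQm : MeasurableSet Q := hQo.measurableSet
  set ρ : ℝ × ℝ → ENNReal := fun p => ENNReal.ofReal (f p.1 * g p.2) with hρ
  have hF := F1_meas α β
  have hρr : ContinuousOn (fun p : ℝ × ℝ => f p.1 * g p.2) Q :=
    (hfc.comp continuous_fst.continuousOn fun p hp => hp.1).mul
      (hgc.comp continuous_snd.continuousOn fun p hp => hp.2)
  have hρc : ContinuousOn ρ Q := ENNReal.continuous_ofReal.comp_continuousOn hρr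
  have hFc : ContinuousOn (F1 α β) Q := fun p hp => by
    obtain ⟨D, hD, -⟩ := F1_fderiv α β hα hβ p hp
    exact hD.continuousAt.continuousWithinAt
  have hρFc : ContinuousOn (ρ ∘ F1 α β) Q := hρc.comp hFc (fun p hp => F1_pos α β hα hβ p hp)
  have hjoint : Measure.map (fun ω => (X ω, Y ω)) ℙ = (volume.restrict Q).withDensity ρ := by
    rw [(indepFun_iff_map_prod_eq_prod_map_map hXm.aemeasurable hYm.aemeasurable).mp hIndep, hf, hg,
      prod_withDensity₀, Measure.prod_restrict]
    · rw [← Measure.volume_eq_prod]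
      refine withDensity_congr_ae ?_
      filter_upwards [ae_restrict_mem hQm] with p hp
      exact (ENNReal.ofReal_mul (hfpos _ hp.1).le).symm
    · exact (hfc.aemeasurable measurableSet_Ioi).ennreal_ofReal
    · exact (hgc.aemeasurable measurableSet_Ioi).ennreal_ofReal
  have hmap : Measure.map (F1 α β) ((volume.restrict Q).withDensity ρ) = (volume.restrict Q).withDensity ρ := by
    rw [← hjoint, Measure.map_map hF (by fun_prop)]
    exact hSameDist
  have hinj : InjOn (F1 α β) Q := fun p hp q hq h => by
    rw [← F1_invol α β hα hβ p hp.1 hp.2, h, F1_invol α β hα hβ q hq.1 hq.2]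
  choose! D hD hdet using fun p hp => F1_fderiv α β hα hβ p hp
  have heq : (volume.restrict Q).withDensity ρ = (volume.restrict Q).withDensity (ρ ∘ F1 α β) := by
    ext s hs
    rw [← hmap, Measure.map_apply hF hs, withDensity_apply _ (hF hs), withDensity_apply _ hs,
      Measure.restrict_restrict (hF hs), Measure.restrict_restrict hs]
    have him : F1 α β ⁻¹' s ∩ Q = F1 α β '' (s ∩ Q) := by
      ext p
      constructor
      · rintro ⟨hp, hpQ⟩
        exact ⟨F1 α β p, ⟨hp, F1_pos α β hα hβ p hpQ⟩, F1_invol α β hα hβ p hpQ.1 hpQ.2⟩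
      · rintro ⟨q, ⟨hq, hqQ⟩, rfl⟩
        refine ⟨?_, F1_pos α β hα hβ q hqQ⟩
        rw [mem_preimage, F1_invol α β hα hβ q hqQ.1 hqQ.2]
        exact hq
    rw [him, lintegral_image_eq_lintegral_abs_det_fderiv_mul volume (hs.inter hQm)
      (fun p hp => (hD p hp.2).hasFDerivWithinAt) (hinj.mono inter_subset_right)]
    refine setLIntegral_congr_fun (hs.inter hQm) fun p hp => ?_
    simp [hdet p hp.2]
  rw [withDensity_eq_iff_of_sigmaFinite (hρc.aemeasurable hQm) (hρFc.aemeasurable hQm)] at heq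
  have hE := Measure.eqOn_open_of_ae_eq heq hQo hρc hρFc
  intro x y hx hy
  have hp : (x, y) ∈ Q := ⟨hx, hy⟩
  have := hE hp
  have hp' := F1_pos α β hα hβ _ hp
  simp only [hρ, Function.comp] at this
  rwa [ENNReal.ofReal_eq_ofReal_iff (mul_pos (hfpos _ hx) (hgpos _ hy)).le (mul_pos (hfpos _ hp'.1) (hgpos _ hp'.2)).le] at this

theorem norm_part (f : ℝ → ℝ) (μ : Measure ℝ) [IsProbabilityMeasure μ]
    (hf : μ = (volume.restrict (Ioi 0)).withDensity (fun x => ENNReal.ofReal (f x)))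
    (hfpos : ∀ x ∈ Ioi (0 : ℝ), 0 < f x)
    (hfc : ContinuousOn f (Ioi 0)) (L c a k : ℝ) (ha : 0 ≤ a)
    (h : ∀ x, 0 < x → Real.log (f x) = k + (L * Real.log x - c * a * x - c / x)) :
    0 < c ∧ μ = volume.withDensity (fun x => ENNReal.ofReal (gigPdf (L + 1) (c * a) c x)) := by
  have hfe : ∀ x, 0 < x → f x = Real.exp k * (x ^ L * Real.exp (-(c * a * x) - c / x)) := by
    intro x hx
    rw [← Real.exp_log (hfpos x hx), h x hx, Real.rpow_def_of_pos hx, ← Real.exp_add, ← Real.exp_add]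
    congr 1
    ring
  have hint1 : ∫⁻ x in Ioi 0, ENNReal.ofReal (f x) = 1 := by
    have := measure_univ (μ := μ)
    rwa [hf, withDensity_apply _ MeasurableSet.univ, Measure.restrict_univ] at this
  have hnn : 0 ≤ᵐ[volume.restrict (Ioi 0)] f := by
    filter_upwards [ae_restrict_mem measurableSet_Ioi] with x hx
    exact (hfpos x hx).le
  have hsm : AEStronglyMeasurable f (volume.restrict (Ioi 0)) := hfc.aestronglyMeasurable measurableSet_Ioi
  have hI : IntegrableOn f (Ioi 0) := by
    refine ⟨hsm, ?_⟩
    rw [hasFiniteIntegral_iff_ofReal hnn, hint1]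
    simp
  have hval : ∫ x in Ioi 0, f x = 1 := by
    rw [integral_eq_lintegral_of_nonneg_ae hnn hsm, hint1]
    simp
  have hZ : Real.exp k * ∫ x in Ioi (0:ℝ), x ^ L * Real.exp (-(c * a * x) - c / x) = 1 := by
    rw [← integral_const_mul, ← hval]
    exact setIntegral_congr_fun measurableSet_Ioi fun x hx => (hfe x hx).symm
  constructor
  · by_contra hc
    push Not at hc
    apply not_integrableOn_Ioi_rpow L
    refine Integrable.mono' (hI.const_mul (Real.exp (-k))) ?_ ?_
    · refine ContinuousOn.aestronglyMeasurable ?_ measurableSet_Ioi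
      exact fun x hx => (Real.continuousAt_rpow_const _ _ (Or.inl (ne_of_gt hx))).continuousWithinAt
    · filter_upwards [ae_restrict_mem measurableSet_Ioi] with x hx
      have hx : 0 < x := hx
      rw [hfe x hx, ← mul_assoc, ← Real.exp_add, neg_add_cancel, Real.exp_zero, one_mul,
        Real.norm_of_nonneg (by positivity)]
      refine le_mul_of_one_le_right (by positivity) (Real.one_le_exp ?_)
      have h1 : c * a * x ≤ 0 := mul_nonpos_of_nonpos_of_nonneg (mul_nonpos_of_nonpos_of_nonneg hc ha) hx.le
      have h2 : c / x ≤ 0 := div_nonpos_of_nonpos_of_nonneg hc hx.le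
      linarith
  · rw [hf, ← withDensity_indicator measurableSet_Ioi]
    congr 1
    ext x
    by_cases hx : 0 < x
    · rw [indicator_of_mem (mem_Ioi.mpr hx), hfe x hx]
      simp only [gigPdf, if_pos hx, add_sub_cancel_right]
      congr 1
      rw [eq_div_iff (right_ne_zero_of_mul_eq_one hZ)]
      linear_combination (x ^ L * Real.exp (-(c * a * x) - c / x)) * hZ
    · rw [indicator_of_notMem (by simpa using hx)]
      simp [gigPdf, if_neg hx]

end

theorem gig_stationary_characterization
    {Ω : Type*} [MeasureSpace Ω] [IsProbabilityMeasure (ℙ : Measure Ω)]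
    (α β : ℝ) (hα : 0 ≤ α) (hβ : 0 ≤ β) (hαβ : α ≠ β)
    (X Y : Ω → ℝ) (hXm : Measurable X) (hYm : Measurable Y)
    (hXpos : ∀ ω, 0 < X ω) (hYpos : ∀ ω, 0 < Y ω)
    (hIndep : IndepFun X Y ℙ)
    (fX fY : ℝ → ℝ)
    (hfX : Measure.map X ℙ = volume.withDensity (fun x => ENNReal.ofReal (fX x)))
    (hfY : Measure.map Y ℙ = volume.withDensity (fun x => ENNReal.ofReal (fY x)))
    (hfXpos : ∀ x ∈ Ioi (0 : ℝ), 0 < fX x)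
    (hfYpos : ∀ x ∈ Ioi (0 : ℝ), 0 < fY x)
    (hfXdiff : ∀ x ∈ Ioi (0 : ℝ),
      DifferentiableAt ℝ fX x ∧ DifferentiableAt ℝ (deriv fX) x)
    (hfYdiff : ∀ x ∈ Ioi (0 : ℝ),
      DifferentiableAt ℝ fY x ∧ DifferentiableAt ℝ (deriv fY) x)
    (hUVindep :
      IndepFun (fun ω => (F1 α β (X ω, Y ω)).1) (fun ω => (F1 α β (X ω, Y ω)).2) ℙ)
    (hSameDist :
      Measure.map (fun ω => F1 α β (X ω, Y ω)) ℙ = Measure.map (fun ω => (X ω, Y ω)) ℙ) :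
    ∃ (l c : ℝ), 0 < c ∧
      Measure.map X ℙ =
        volume.withDensity (fun x => ENNReal.ofReal (gigPdf l (c * α) c x)) ∧
      Measure.map Y ℙ =
        volume.withDensity (fun x => ENNReal.ofReal (gigPdf l (c * β) c x)) := by
  have hX := dens_restrict X hXm hXpos fX hfX
  have hY := dens_restrict Y hYm hYpos fY hfY
  have hXc : ContinuousOn fX (Ioi 0) := fun x hx => (hfXdiff x hx).1.continuousAt.continuousWithinAt
  have hYc : ContinuousOn fY (Ioi 0) := fun x hx => (hfYdiff x hx).1.continuousAt.continuousWithinAt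
  have hfe := func_eq α β hα hβ X Y hXm hYm hIndep fX fY hX hY hfXpos hfYpos hXc hYc hSameDist
  have dX : ∀ x, 0 < x → HasDerivAt (fun x => Real.log (fX x)) (deriv fX x / fX x) x := fun x hx =>
    (hfXdiff x hx).1.hasDerivAt.log (hfXpos x hx).ne'
  have dY : ∀ x, 0 < x → HasDerivAt (fun x => Real.log (fY x)) (deriv fY x / fY x) x := fun x hx =>
    (hfYdiff x hx).1.hasDerivAt.log (hfYpos x hx).ne'
  have hE := aux_E1 α β hα hβ (fun x => Real.log (fX x)) (fun x => Real.log (fY x))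
    (fun x => deriv fX x / fX x) (fun x => deriv fY x / fY x) dX dY (by
      intro x y hx hy
      have hp := F1_pos α β hα hβ (x, y) ⟨hx, hy⟩
      have h := congrArg Real.log (hfe x y hx hy)
      rw [Real.log_mul (hfXpos x hx).ne' (hfYpos y hy).ne',
        Real.log_mul (hfXpos _ hp.1).ne' (hfYpos _ hp.2).ne'] at h
      exact h)
  obtain ⟨L, c, hLc⟩ := aux_limits α β hα hβ hαβ (fun x => x * (deriv fX x / fX x))
    (fun x => x * (deriv fY x / fY x))
    (fun x hx => differentiableAt_id.mul ((hfYdiff x hx).2.div (hfYdiff x hx).1 (hfYpos x hx).ne')) hE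
  obtain ⟨k1, hk1⟩ := aux_integrate L c α _ _ dX (fun x hx => (hLc x hx).1)
  obtain ⟨k2, hk2⟩ := aux_integrate L c β _ _ dY (fun x hx => (hLc x hx).2)
  have : IsProbabilityMeasure (Measure.map X ℙ) := Measure.isProbabilityMeasure_map hXm.aemeasurable
  have : IsProbabilityMeasure (Measure.map Y ℙ) := Measure.isProbabilityMeasure_map hYm.aemeasurable
  have r1 := norm_part fX _ hX hfXpos hXc L c α k1 hα hk1
  have r2 := norm_part fY _ hY hfYpos hYc L c β k2 hβ hk2
  exact ⟨L + 1, c, r1.1, r1.2, r2.2⟩
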